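/- Let d ≥ 3 and 0 < r < 1. There exists a constant C < ∞, depending only on d and r, such that for every C¹ function f : ℝ^d → ℝ with compact support contained in the open ball B_d, every a ∈ ℝ, and every b ∈ ℝ∖{0}: |∫_{B_d} f(x)/(a + ib − |x|²) d^d x| ≤ C·‖f‖_{C¹}·(1 + a² + b²). -/

import Mathlib

open MeasureTheory Complex Real
open scoped ENNReal

noncomputable section

namespace LatSch

/-- The lattice `Γ = ℤ^d`. -/
abbrev Γd (d : ℕ) := Fin d → ℤ

/-- The Hilbert space `ℓ²(Γ)`. -/
abbrev L2 (d : ℕ) := lp (fun _ : Γd d => ℂ) 2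

/-- Euclidean norm of a lattice point. -/
def lnorm {d : ℕ} (x : Γd d) : ℝ := Real.sqrt (∑ i, ((x i : ℝ)) ^ 2)

/-- The standard basis vector `δ_x` of `ℓ²(Γ)`. -/
def delta {d : ℕ} (x : Γd d) : L2 d := lp.single 2 x 1

local notation "⟪" a ", " b "⟫" => @inner ℂ _ _ a b

/-- The cube `[-π, π]^d`, a fundamental domain of the torus. -/
def torusBox (d : ℕ) : Set (Fin d → ℝ) := Set.univ.pi fun _ => Set.Icc (-π) π

/-- `⟨p, m⟩` for `p ∈ ℝ^d`, `m ∈ ℤ^d`. -/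
def dotZ {d : ℕ} (p : Fin d → ℝ) (m : Γd d) : ℝ := ∑ i, p i * (m i : ℝ)

/-- Fourier coefficient `f̂(m) = (2π)^{-d} ∫_{[-π,π]^d} f(p) e^{i⟨p,m⟩} dp`. -/
def fCoeff {d : ℕ} (f : (Fin d → ℝ) → ℝ) (m : Γd d) : ℂ :=
  ((1 / (2 * π) ^ d : ℝ) : ℂ) *
    ∫ p in torusBox d, (f p : ℂ) * Complex.exp (Complex.I * (dotZ p m : ℝ))

/-- `H` is the Fourier multiplier (hopping matrix) `h(f)`, characterized by its
matrix elements `⟨δ_x, H δ_y⟩ = f̂(x - y)`. -/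
def IsMultiplier {d : ℕ} (f : (Fin d → ℝ) → ℝ) (H : L2 d →L[ℂ] L2 d) : Prop :=
  ∀ x y : Γd d, ⟪delta x, H (delta y)⟫ = fCoeff f (x - y)

/-- `M` is the operator of multiplication by the potential `V`. -/
def IsMulOp {d : ℕ} (V : Γd d → ℝ) (M : L2 d →L[ℂ] L2 d) : Prop :=
  ∀ (ψ : L2 d) (x : Γd d), (M ψ : ∀ _ : Γd d, ℂ) x = (V x : ℂ) * (ψ : ∀ _ : Γd d, ℂ) x

/-- Partial derivative `∂_{p_k} f (p)`. -/
def pd {d : ℕ} (f : (Fin d → ℝ) → ℝ) (k : Fin d) (p : Fin d → ℝ) : ℝ :=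
  fderiv ℝ f p (Pi.single k 1)

/-- `|∇f|²(p) = Σ_k (∂_{p_k} f(p))²`. -/
def gradSq {d : ℕ} (f : (Fin d → ℝ) → ℝ) (p : Fin d → ℝ) : ℝ := ∑ k, pd f k p ^ 2

/-- The Hessian matrix of `f` at `p`. -/
def hess {d : ℕ} (f : (Fin d → ℝ) → ℝ) (p : Fin d → ℝ) : Matrix (Fin d) (Fin d) ℝ :=
  Matrix.of fun i j => fderiv ℝ (fun q => fderiv ℝ f q (Pi.single j 1)) p (Pi.single i 1)

/-- All critical points of `f` are nondegenerate (`f` is a Morse function). -/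
def IsMorse {d : ℕ} (f : (Fin d → ℝ) → ℝ) : Prop :=
  ∀ p, fderiv ℝ f p = 0 → (hess f p).det ≠ 0

/-- `2πℤ^d`-periodicity. -/
def Periodic2pi {d : ℕ} (f : (Fin d → ℝ) → ℝ) : Prop :=
  ∀ (p : Fin d → ℝ) (m : Γd d), f (p + fun i => 2 * π * (m i : ℝ)) = f p

/-- A dispersion relation: a `2πℤ^d`-periodic function with minimum `0`. -/
def IsDispersion {d : ℕ} (f : (Fin d → ℝ) → ℝ) : Prop :=
  Periodic2pi f ∧ (∀ p, 0 ≤ f p) ∧ (∃ p, f p = 0)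

/-- Condition (M): `𝔢` and `|∇𝔢|²` are Morse functions. -/
def CondM {d : ℕ} (f : (Fin d → ℝ) → ℝ) : Prop := IsMorse f ∧ IsMorse (gradSq f)

/-- `Φ_{m,n}(V) = (Σ_x |V(x)|^{1/m} (1+|x|)^n)^m`, valued in `[0,∞]`. -/
def Phi {d : ℕ} (m n : ℕ) (V : Γd d → ℝ) : ℝ≥0∞ :=
  (∑' x : Γd d, ENNReal.ofReal (|V x| ^ ((1 : ℝ) / m) * (1 + lnorm x) ^ n)) ^ m

/-- The set of eigenvectors of `H` (with real eigenvalue). -/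
def eigvecs {d : ℕ} (H : L2 d →L[ℂ] L2 d) : Set (L2 d) :=
  {ψ : L2 d | ψ ≠ 0 ∧ ∃ μ : ℝ, H ψ = (μ : ℂ) • ψ}

/-- `N_pp[H]`: the Hilbert-space dimension of the closed linear span of all
eigenvectors of `H`. -/
def Npp {d : ℕ} (H : L2 d →L[ℂ] L2 d) : Cardinal :=
  Module.rank ℂ ((Submodule.span ℂ (eigvecs H)).topologicalClosure)

/-- The Fourier transform `ĝ_x(p) = (i/2·|∇𝔢(p)|² + ⟨∇𝔢(p), x⟩) e^{-i⟨p,x⟩}`. -/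
def ghat {d : ℕ} (e : (Fin d → ℝ) → ℝ) (x : Γd d) (p : Fin d → ℝ) : ℂ :=
  ((Complex.I / 2) * ((gradSq e p : ℝ) : ℂ) + ((∑ k, pd e k p * (x k : ℝ) : ℝ) : ℂ)) *
    Complex.exp (-(Complex.I * (dotZ p x : ℝ)))

/-- `g : Γ → ℓ²(Γ)` is the family of vectors `g_x` with Fourier transform `ĝ_x`. -/
def IsGVec {d : ℕ} (e : (Fin d → ℝ) → ℝ) (g : Γd d → L2 d) : Prop :=
  ∀ x m : Γd d,
    (g x : ∀ _ : Γd d, ℂ) m =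
      ((1 / (2 * π) ^ d : ℝ) : ℂ) *
        ∫ p in torusBox d, ghat e x p * Complex.exp (Complex.I * (dotZ p m : ℝ))

/-- `C` is the bounded self-adjoint realization
`C_V = Σ_x i V(x) (|δ_x⟩⟨g_x| - |g_x⟩⟨δ_x|)` of the commutator `i[V, A(𝔢)]`. -/
def IsCommOp {d : ℕ} (V : Γd d → ℝ) (g : Γd d → L2 d) (C : L2 d →L[ℂ] L2 d) : Prop :=
  ∀ ψ : L2 d,
    HasSum (fun x : Γd d =>
      (Complex.I * (V x : ℂ)) • (⟪g x, ψ⟫ • delta x - ⟪delta x, ψ⟫ • g x)) (C ψ)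

/-- `R` is the resolvent `(z - H)^{-1}`. -/
def IsResolventAt {d : ℕ} (H : L2 d →L[ℂ] L2 d) (z : ℂ) (R : L2 d →L[ℂ] L2 d) : Prop :=
  R.comp (z • (1 : L2 d →L[ℂ] L2 d) - H) = 1 ∧ (z • (1 : L2 d →L[ℂ] L2 d) - H).comp R = 1

/-- `‖f‖_{C^m} ≤ C`: all partial derivatives of order `≤ m` are bounded by `C`. -/
def CmNormLe {d : ℕ} (m : ℕ) (f : (Fin d → ℝ) → ℝ) (C : ℝ) : Prop :=
  ∀ j : ℕ, j ≤ m → ∀ (p : Fin d → ℝ) (k : Fin j → Fin d),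
    |iteratedFDeriv ℝ j f p (fun i => Pi.single (k i) 1)| ≤ C

/-- `K(𝔢) ≥ K`: at every critical point, every eigenvalue `λ` of the Hessian
satisfies `|λ|^{1/2} ≥ K`. -/
def MinCurvGe {d : ℕ} (f : (Fin d → ℝ) → ℝ) (K : ℝ) : Prop :=
  ∀ p, fderiv ℝ f p = 0 → ∀ (lam : ℝ) (v : Fin d → ℝ), v ≠ 0 →
    (hess f p).mulVec v = lam • v → K ^ 2 ≤ |lam|

/-- The set of thresholds `Thr(𝔢) = 𝔢(Crit(𝔢))`. -/
def Thr {d : ℕ} (f : (Fin d → ℝ) → ℝ) : Set ℝ := f '' {p | fderiv ℝ f p = 0}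


/-- The number of strictly negative eigenvalues of `C`, counted with multiplicity:
the dimension of the span of eigenvectors with strictly negative eigenvalue. -/
def NegCount {d : ℕ} (C : L2 d →L[ℂ] L2 d) : Cardinal :=
  Module.rank ℂ (Submodule.span ℂ
    {ψ : L2 d | ψ ≠ 0 ∧ ∃ μ : ℝ, μ < 0 ∧ C ψ = (μ : ℂ) • ψ})

/-- The number of strictly positive eigenvalues of `C`, counted with multiplicity. -/
def PosCount {d : ℕ} (C : L2 d →L[ℂ] L2 d) : Cardinal :=
  Module.rank ℂ (Submodule.span ℂ
    {ψ : L2 d | ψ ≠ 0 ∧ ∃ μ : ℝ, 0 < μ ∧ C ψ = (μ : ℂ) • ψ})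

/-!
In polar coordinates the integral along a ray is `∫ s in 0..R, s ^ (d - 1) F(s) / (z - s ^ 2)`.
Here `2 s / (s ^ 2 - z)` has the primitive `log (s ^ 2 - z)`, and for `d ≥ 3` the remaining factor
`s ^ (d - 2) F(s)` vanishes at both ends of the interval, so integrating by parts leaves only the
logarithm under the integral. Since `|s ^ 2 - z| ≥ (s - √(re z)) ^ 2`, its singularity is integrable
uniformly in `z` as long as `z` stays bounded. For large `z` the denominator is at least `1` on the
ball, and there is nothing to cancel.
-/

section PosLog

lemma abs_log_le_abs_add_posLog_inv (x : ℝ) : |Real.log x| ≤ |x| + log⁺ x⁻¹ := by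
  have hpos : log⁺ x ≤ |x| := by
    rw [← posLog_abs, posLog_apply]
    exact max_le (abs_nonneg x) (Real.log_le_self (abs_nonneg x))
  rw [← posLog_sub_posLog_inv, abs_le]
  constructor <;> linarith [posLog_nonneg (x := x), posLog_nonneg (x := x⁻¹), abs_nonneg x]

lemma integrable_posLog_inv : Integrable fun u : ℝ ↦ log⁺ u⁻¹ := by
  have hsupp : Function.support (fun u : ℝ ↦ log⁺ u⁻¹) ⊆ Set.Icc (-1) 1 := fun u hu ↦ by
    rw [Function.mem_support, Ne, posLog_eq_zero_iff, abs_inv, not_le] at hu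
    exact abs_le.1 (one_lt_inv_iff₀.1 hu).2.le
  rw [← integrableOn_iff_integrable_of_support_subset hsupp]
  have hlog : IntegrableOn Real.log (Set.Icc (-1) 1) :=
    (intervalIntegrable_iff_integrableOn_Icc_of_le (by norm_num)).1
      intervalIntegral.intervalIntegrable_log'
  refine (integrableOn_congr_fun (fun u _ ↦ ?_) measurableSet_Icc).2 hlog.neg.pos_part
  simp only [posLog_apply, Real.log_inv, Pi.neg_apply, max_comm]

end PosLog

section RadialPrimitive

variable {w : ℂ} {R s : ℝ}

-- Since `√a = 0` for `a < 0`, both signs of `a` are covered.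
lemma sub_sqrt_sq_le_abs_sq_sub (hs : 0 ≤ s) (a : ℝ) : (s - √a) ^ 2 ≤ |s ^ 2 - a| := by
  rcases le_total 0 a with ha | ha
  · calc (s - √a) ^ 2 = |s - √a| * |s - √a| := by rw [abs_mul_abs_self, sq]
      _ ≤ |s - √a| * |s + √a| := by
        gcongr ?_ * ?_
        rw [abs_of_nonneg (add_nonneg hs a.sqrt_nonneg), abs_le]
        constructor <;> linarith [a.sqrt_nonneg]
      _ = |s ^ 2 - a| := by rw [← abs_mul, mul_comm, ← sq_sub_sq, Real.sq_sqrt ha]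
  · rw [Real.sqrt_eq_zero_of_nonpos ha, sub_zero]
    exact (le_add_of_nonneg_right (neg_nonneg.2 ha)).trans (le_abs_self _)

lemma sq_add_mem_slitPlane (hw : w ∈ slitPlane) (s : ℝ) : (s : ℂ) ^ 2 + w ∈ slitPlane := by
  rw [← ofReal_pow]
  rw [mem_slitPlane_iff] at hw ⊢
  rw [add_re, add_im, ofReal_re, ofReal_im, zero_add]
  exact hw.imp_left (add_pos_of_nonneg_of_pos (sq_nonneg s))

lemma continuous_log_sq_add (hw : w ∈ slitPlane) :
    Continuous fun s : ℝ ↦ Complex.log ((s : ℂ) ^ 2 + w) :=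
  Continuous.clog (by fun_prop) (sq_add_mem_slitPlane hw)

lemma hasDerivAt_log_sq_add (hw : w ∈ slitPlane) (s : ℝ) :
    HasDerivAt (fun s : ℝ ↦ Complex.log ((s : ℂ) ^ 2 + w)) (2 * s / ((s : ℂ) ^ 2 + w)) s := by
  refine HasDerivAt.clog_real ?_ (sq_add_mem_slitPlane hw s)
  simpa using ((hasDerivAt_pow 2 s).ofReal_comp).add_const w

lemma norm_log_sq_add_le (hs : 0 ≤ s) (hne : s ≠ √(-w.re)) :
    ‖Complex.log ((s : ℂ) ^ 2 + w)‖ ≤ s ^ 2 + ‖w‖ + π + 2 * log⁺ (s - √(-w.re))⁻¹ := by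
  set v := (s : ℂ) ^ 2 + w
  have hdist : (s - √(-w.re)) ^ 2 ≤ ‖v‖ := by
    have hre : v.re = s ^ 2 - -w.re := by simp [v, ← ofReal_pow]
    exact (sub_sqrt_sq_le_abs_sq_sub hs _).trans (hre ▸ abs_re_le_norm v)
  have hposLog : log⁺ ‖v‖⁻¹ ≤ 2 * log⁺ (s - √(-w.re))⁻¹ := by
    have hsq : 0 < (s - √(-w.re)) ^ 2 := sq_pos_of_ne_zero (sub_ne_zero.2 hne)
    calc log⁺ ‖v‖⁻¹ ≤ log⁺ ((s - √(-w.re)) ^ 2)⁻¹ :=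
          posLog_le_posLog (by positivity) (inv_anti₀ hsq hdist)
      _ = 2 * log⁺ (s - √(-w.re))⁻¹ := by rw [← inv_pow, posLog_pow, Nat.cast_ofNat]
  have hnorm : ‖v‖ ≤ s ^ 2 + ‖w‖ := (norm_add_le _ _).trans_eq (by simp)
  calc ‖Complex.log v‖ ≤ |Real.log ‖v‖| + |arg v| := by
        simpa only [log_re, log_im] using norm_le_abs_re_add_abs_im (Complex.log v)
    _ ≤ (‖v‖ + log⁺ ‖v‖⁻¹) + π := by
        gcongr
        · simpa only [abs_norm] using abs_log_le_abs_add_posLog_inv ‖v‖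
        · exact abs_arg_le_pi v
    _ ≤ s ^ 2 + ‖w‖ + π + 2 * log⁺ (s - √(-w.re))⁻¹ := by linarith

lemma integral_norm_log_sq_add_le (hw : w ∈ slitPlane) (hR : 0 ≤ R) :
    ∫ s in (0 : ℝ)..R, ‖Complex.log ((s : ℂ) ^ 2 + w)‖ ≤
      R * (R ^ 2 + ‖w‖ + π) + 2 * ∫ u : ℝ, log⁺ u⁻¹ := by
  set c : ℝ := √(-w.re)
  have hint : Integrable fun s ↦ log⁺ (s - c)⁻¹ := integrable_posLog_inv.comp_sub_right c
  have hpointwise : ∀ᵐ s : ℝ ∂volume.restrict (Set.Icc 0 R),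
      ‖Complex.log ((s : ℂ) ^ 2 + w)‖ ≤ R ^ 2 + ‖w‖ + π + 2 * log⁺ (s - c)⁻¹ := by
    filter_upwards [ae_restrict_mem measurableSet_Icc,
      ae_restrict_of_ae (volume.ae_ne c)] with s hs hne
    have := pow_le_pow_left₀ hs.1 hs.2 2
    linarith [norm_log_sq_add_le hs.1 hne]
  calc ∫ s in (0 : ℝ)..R, ‖Complex.log ((s : ℂ) ^ 2 + w)‖
      ≤ ∫ s in (0 : ℝ)..R, (R ^ 2 + ‖w‖ + π + 2 * log⁺ (s - c)⁻¹) :=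
        intervalIntegral.integral_mono_ae_restrict hR
          ((continuous_log_sq_add hw).norm.intervalIntegrable _ _)
          (intervalIntegrable_const.add (hint.intervalIntegrable.const_mul 2)) hpointwise
    _ = R * (R ^ 2 + ‖w‖ + π) + 2 * ∫ s in (0 : ℝ)..R, log⁺ (s - c)⁻¹ := by
        rw [intervalIntegral.integral_add intervalIntegrable_const
          (hint.intervalIntegrable.const_mul 2), intervalIntegral.integral_const,
          intervalIntegral.integral_const_mul, sub_zero, smul_eq_mul]
    _ ≤ R * (R ^ 2 + ‖w‖ + π) + 2 * ∫ u : ℝ, log⁺ u⁻¹ := by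
        gcongr
        rw [intervalIntegral.integral_of_le hR,
          ← integral_sub_right_eq_self (fun u : ℝ ↦ log⁺ u⁻¹) c]
        exact setIntegral_le_integral hint (.of_forall fun _ ↦ posLog_nonneg)

variable {F : Type*} [NormedAddCommGroup F] [NormedSpace ℂ F] [CompleteSpace F]
  {u u' : ℝ → F} {N : ℝ}

lemma integral_div_sq_add_smul_eq (hw : w ∈ slitPlane) (hu : ∀ s, HasDerivAt u (u' s) s)
    (hu' : Continuous u') (h0 : u 0 = 0) (hR : u R = 0) :
    ∫ s in (0 : ℝ)..R, (2 * s / ((s : ℂ) ^ 2 + w)) • u s =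
      -∫ s in (0 : ℝ)..R, Complex.log ((s : ℂ) ^ 2 + w) • u' s := by
  have hcont : Continuous fun s : ℝ ↦ 2 * (s : ℂ) / ((s : ℂ) ^ 2 + w) :=
    Continuous.div (by fun_prop) (by fun_prop)
      fun s ↦ slitPlane_ne_zero (sq_add_mem_slitPlane hw s)
  rw [intervalIntegral.integral_smul_deriv_eq_deriv_smul
    (fun s _ ↦ hasDerivAt_log_sq_add hw s) (fun s _ ↦ hu s)
    (hcont.intervalIntegrable _ _) (hu'.intervalIntegrable _ _), h0, hR]
  simp

lemma norm_integral_div_sq_add_smul_le (hw : w ∈ slitPlane) (hu : ∀ s, HasDerivAt u (u' s) s)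
    (hu' : Continuous u') (h0 : u 0 = 0) (huR : u R = 0) (hR : 0 ≤ R)
    (hN : ∀ s ∈ Set.Icc 0 R, ‖u' s‖ ≤ N) :
    ‖∫ s in (0 : ℝ)..R, (2 * s / ((s : ℂ) ^ 2 + w)) • u s‖ ≤
      (∫ s in (0 : ℝ)..R, ‖Complex.log ((s : ℂ) ^ 2 + w)‖) * N := by
  rw [integral_div_sq_add_smul_eq hw hu hu' h0 huR, norm_neg,
    ← intervalIntegral.integral_mul_const]
  refine intervalIntegral.norm_integral_le_of_norm_le hR (.of_forall fun s hs ↦ ?_)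
    (((continuous_log_sq_add hw).norm.mul continuous_const).intervalIntegrable _ _)
  rw [norm_smul]
  gcongr
  exact hN s ⟨hs.1.le, hs.2⟩

end RadialPrimitive

section Polar

variable {F : Type*} [NormedAddCommGroup F] [NormedSpace ℝ F]

lemma integral_volumeIoiPow (n : ℕ) (g : ℝ → F) :
    ∫ s : Set.Ioi (0 : ℝ), g s ∂Measure.volumeIoiPow n = ∫ s in Set.Ioi (0 : ℝ), s ^ n • g s := by
  simp only [Measure.volumeIoiPow, ENNReal.ofReal]
  rw [integral_withDensity_eq_integral_smul (measurable_subtype_coe.pow_const _).real_toNNReal,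
    integral_subtype_comap measurableSet_Ioi fun s ↦ Real.toNNReal (s ^ n) • g s]
  refine setIntegral_congr_fun measurableSet_Ioi fun s hs ↦ ?_
  rw [NNReal.smul_def, Real.coe_toNNReal _ (pow_nonneg (le_of_lt hs) _)]

variable {E : Type*} [NormedAddCommGroup E] [NormedSpace ℝ E] [FiniteDimensional ℝ E]
  [Nontrivial E] [MeasurableSpace E] [BorelSpace E] (μ : Measure E) [μ.IsAddHaarMeasure]
  {R : ℝ} {G : E → F}

lemma integral_eq_integral_toSphere_integral_Ioi (hG : Integrable G μ) :
    ∫ x, G x ∂μ = ∫ ω, (∫ s in Set.Ioi (0 : ℝ),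
      s ^ (Module.finrank ℝ E - 1) • G (s • (ω : E))) ∂μ.toSphere := by
  let g : Metric.sphere (0 : E) 1 × Set.Ioi (0 : ℝ) → F := fun p ↦ G ((p.2 : ℝ) • (p.1 : E))
  have hpolar := μ.measurePreserving_homeomorphUnitSphereProd
  have hemb := (homeomorphUnitSphereProd E).measurableEmbedding
  have hg : g ∘ homeomorphUnitSphereProd E = G ∘ Subtype.val :=
    funext fun x ↦ congrArg G <|
      congrArg Subtype.val ((homeomorphUnitSphereProd E).symm_apply_apply x)
  have hgint : Integrable g (μ.toSphere.prod (.volumeIoiPow (Module.finrank ℝ E - 1))) := by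
    rw [← hpolar.integrable_comp_emb hemb, hg,
      ← integrableOn_iff_comap_subtypeVal (measurableSet_singleton 0).compl]
    exact hG.integrableOn
  calc ∫ x, G x ∂μ = ∫ x : ({0}ᶜ : Set E), G x ∂μ.comap (↑) := by
        rw [integral_subtype_comap (measurableSet_singleton _).compl G,
          MeasureTheory.restrict_compl_singleton]
    _ = ∫ p, g p ∂μ.toSphere.prod (.volumeIoiPow (Module.finrank ℝ E - 1)) := by
        rw [← hpolar.integral_comp hemb]
        exact integral_congr_ae (.of_forall fun x ↦ (congrFun hg x).symm)
    _ = _ := by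
        rw [integral_prod _ hgint]
        exact integral_congr_ae
          (.of_forall fun ω ↦ integral_volumeIoiPow _ fun s ↦ G (s • (ω : E)))

lemma setIntegral_ball_eq_integral_toSphere (hR : 0 ≤ R)
    (hG : IntegrableOn G (Metric.ball 0 R) μ) :
    ∫ x in Metric.ball 0 R, G x ∂μ = ∫ ω, (∫ s in (0 : ℝ)..R,
      s ^ (Module.finrank ℝ E - 1) • G (s • (ω : E))) ∂μ.toSphere := by
  rw [← integral_indicator Metric.isOpen_ball.measurableSet,
    integral_eq_integral_toSphere_integral_Ioi μ
      (hG.integrable_indicator Metric.isOpen_ball.measurableSet)]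
  refine integral_congr_ae (.of_forall fun ω ↦ ?_)
  have hball : ∀ s ∈ Set.Ioi (0 : ℝ), (s • (ω : E) ∈ Metric.ball 0 R ↔ s ∈ Set.Iio R) :=
    fun s hs ↦ by
      rw [mem_ball_zero_iff, norm_smul, norm_eq_of_mem_sphere, mul_one,
        Real.norm_of_nonneg (le_of_lt hs), Set.mem_Iio]
  calc ∫ s in Set.Ioi (0 : ℝ), s ^ (Module.finrank ℝ E - 1) •
        (Metric.ball 0 R).indicator G (s • (ω : E))
      = ∫ s in Set.Ioi (0 : ℝ), (Set.Iio R).indicator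
          (fun s ↦ s ^ (Module.finrank ℝ E - 1) • G (s • (ω : E))) s :=
        setIntegral_congr_fun measurableSet_Ioi fun s hs ↦ by
          classical
          simp only [Set.indicator_apply, hball s hs, smul_ite, smul_zero]
    _ = ∫ s in (0 : ℝ)..R, s ^ (Module.finrank ℝ E - 1) • G (s • (ω : E)) := by
        rw [setIntegral_indicator measurableSet_Iio, Set.Ioi_inter_Iio,
          intervalIntegral.integral_of_le hR, integral_Ioc_eq_integral_Ioo]

end Polar

section Ray

variable {E F : Type*} [NormedAddCommGroup E] [NormedSpace ℝ E] [NormedAddCommGroup F]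
  [NormedSpace ℝ F] {f : E → F} {ω : E} {R M N s : ℝ}

lemma hasDerivAt_pow_succ_smul_comp_smul (hf : Differentiable ℝ f) (ω : E) (n : ℕ) (s : ℝ) :
    HasDerivAt (fun t : ℝ ↦ t ^ (n + 1) • f (t • ω))
      (s ^ (n + 1) • fderiv ℝ f (s • ω) ω + ((n + 1) * s ^ n) • f (s • ω)) s := by
  have hray : HasDerivAt (fun t : ℝ ↦ t • ω) ω s := by
    simpa using (hasDerivAt_id s).smul_const ω
  have hcomp : HasDerivAt (fun t : ℝ ↦ f (t • ω)) (fderiv ℝ f (s • ω) ω) s :=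
    (hf (s • ω)).hasFDerivAt.comp_hasDerivAt s hray
  simpa using! (hasDerivAt_pow (n + 1) s).smul hcomp

lemma norm_pow_succ_smul_fderiv_add_le (hω : ‖ω‖ ≤ 1) (hs : s ∈ Set.Icc 0 R)
    (hM : ‖f (s • ω)‖ ≤ M) (hN : ‖fderiv ℝ f (s • ω)‖ ≤ N) (n : ℕ) :
    ‖s ^ (n + 1) • fderiv ℝ f (s • ω) ω + ((n + 1) * s ^ n) • f (s • ω)‖ ≤
      R ^ (n + 1) * N + (n + 1) * R ^ n * M := by
  obtain ⟨hs0, hsR⟩ := hs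
  have hderiv : ‖fderiv ℝ f (s • ω) ω‖ ≤ N :=
    ((fderiv ℝ f (s • ω)).unit_le_opNorm ω hω).trans hN
  calc _ ≤ s ^ (n + 1) * ‖fderiv ℝ f (s • ω) ω‖ + (n + 1) * s ^ n * ‖f (s • ω)‖ := by
        refine (norm_add_le _ _).trans_eq ?_
        rw [norm_smul, norm_smul, Real.norm_of_nonneg (by positivity),
          Real.norm_of_nonneg (by positivity)]
    _ ≤ R ^ (n + 1) * N + (n + 1) * R ^ n * M := by
        have := hs0.trans hsR
        gcongr

end Ray

section Resolvent

variable {E F : Type*} [NormedAddCommGroup E] [NormedAddCommGroup F] [NormedSpace ℂ F]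
  {R M N : ℝ} {f : E → F} {w : ℂ}

lemma continuous_inv_norm_sq_add_smul (hw : w ∈ slitPlane) (hf : Continuous f) :
    Continuous fun x ↦ ((‖x‖ : ℂ) ^ 2 + w)⁻¹ • f x :=
  (Continuous.inv₀ (by fun_prop)
    fun x ↦ slitPlane_ne_zero (sq_add_mem_slitPlane hw ‖x‖)).smul hf

lemma one_le_norm_sq_add {t : ℝ} (ht : |t| ≤ R) (hw : R ^ 2 + 1 ≤ ‖w‖) :
    1 ≤ ‖(t : ℂ) ^ 2 + w‖ := by
  have hsq : ‖(t : ℂ) ^ 2‖ ≤ R ^ 2 := by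
    simpa using pow_le_pow_left₀ (abs_nonneg t) ht 2
  rw [add_comm]
  linarith [norm_le_add_norm_add w ((t : ℂ) ^ 2)]

variable [NormedSpace ℝ E]

lemma norm_setIntegral_inv_norm_sq_add_smul_le_of_le_norm [FiniteDimensional ℝ E]
    [MeasurableSpace E] (μ : Measure E) [IsFiniteMeasureOnCompacts μ] (hw : R ^ 2 + 1 ≤ ‖w‖)
    (hM : ∀ x ∈ Metric.closedBall 0 R, ‖f x‖ ≤ M) :
    ‖∫ x in Metric.ball 0 R, ((‖x‖ : ℂ) ^ 2 + w)⁻¹ • f x ∂μ‖ ≤ M * μ.real (Metric.ball 0 R) := by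
  refine norm_setIntegral_le_of_norm_le_const measure_ball_lt_top fun x hx ↦ ?_
  have hone : 1 ≤ ‖(‖x‖ : ℂ) ^ 2 + w‖ :=
    one_le_norm_sq_add (by simpa using (mem_ball_zero_iff.1 hx).le) hw
  rw [norm_smul, norm_inv]
  exact (mul_le_of_le_one_left (norm_nonneg _) (inv_le_one_of_one_le₀ hone)).trans
    (hM x (Metric.ball_subset_closedBall hx))

variable [CompleteSpace F]

lemma norm_integral_pow_smul_inv_sq_add_smul_ray_le (hw : w ∈ slitPlane) (hR : 0 ≤ R)
    (hf : ContDiff ℝ 1 f) (hf0 : ∀ x ∈ Metric.sphere 0 R, f x = 0)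
    (hM : ∀ x ∈ Metric.closedBall 0 R, ‖f x‖ ≤ M)
    (hN : ∀ x ∈ Metric.closedBall 0 R, ‖fderiv ℝ f x‖ ≤ N) {ω : E} (hω : ‖ω‖ = 1) (n : ℕ) :
    ‖∫ s in (0 : ℝ)..R, s ^ (n + 2) • (((s : ℂ) ^ 2 + w)⁻¹ • f (s • ω))‖ ≤
      2⁻¹ * ((∫ s in (0 : ℝ)..R, ‖Complex.log ((s : ℂ) ^ 2 + w)‖) *
        (R ^ (n + 1) * N + (n + 1) * R ^ n * M)) := by
  have hray : ∀ s ∈ Set.Icc 0 R, s • ω ∈ Metric.closedBall 0 R := fun s hs ↦ by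
    simpa [norm_smul, hω, abs_of_nonneg hs.1] using hs.2
  have hendpoint : f (R • ω) = 0 := hf0 _ (by simp [norm_smul, hω, abs_of_nonneg hR])
  have hderiv_cont : Continuous fun s : ℝ ↦
      s ^ (n + 1) • fderiv ℝ f (s • ω) ω + ((n + 1) * s ^ n) • f (s • ω) := by
    have := hf.continuous
    have := hf.continuous_fderiv one_ne_zero
    fun_prop
  have hintegrand : ∀ s : ℝ, s ^ (n + 2) • (((s : ℂ) ^ 2 + w)⁻¹ • f (s • ω)) =
      (2⁻¹ : ℂ) • ((2 * s / ((s : ℂ) ^ 2 + w)) • s ^ (n + 1) • f (s • ω)) := fun s ↦ by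
    simp only [← Complex.coe_smul, smul_smul]
    congr 1
    push_cast
    ring
  simp_rw [hintegrand]
  rw [intervalIntegral.integral_smul, norm_smul, norm_inv, Complex.norm_ofNat]
  gcongr
  exact norm_integral_div_sq_add_smul_le hw
    (hasDerivAt_pow_succ_smul_comp_smul (hf.differentiable one_ne_zero) ω n) hderiv_cont
    (by simp) (by simp [hendpoint]) hR
    fun s hs ↦ norm_pow_succ_smul_fderiv_add_le hω.le hs (hM _ (hray s hs)) (hN _ (hray s hs)) n

variable [FiniteDimensional ℝ E] [MeasurableSpace E] [BorelSpace E]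
  (μ : Measure E) [μ.IsAddHaarMeasure]

lemma norm_setIntegral_inv_norm_sq_add_smul_le {n : ℕ} (hE : Module.finrank ℝ E = n + 3)
    (hw : w ∈ slitPlane) (hR : 0 ≤ R) (hf : ContDiff ℝ 1 f)
    (hf0 : ∀ x ∈ Metric.sphere 0 R, f x = 0)
    (hM : ∀ x ∈ Metric.closedBall 0 R, ‖f x‖ ≤ M)
    (hN : ∀ x ∈ Metric.closedBall 0 R, ‖fderiv ℝ f x‖ ≤ N) :
    ‖∫ x in Metric.ball 0 R, ((‖x‖ : ℂ) ^ 2 + w)⁻¹ • f x ∂μ‖ ≤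
      2⁻¹ * ((R * (R ^ 2 + ‖w‖ + π) + 2 * ∫ u : ℝ, log⁺ u⁻¹) *
        (R ^ (n + 1) * N + (n + 1) * R ^ n * M)) * μ.toSphere.real Set.univ := by
  have : Nontrivial E := Module.nontrivial_of_finrank_pos (R := ℝ) (by omega)
  have hzero : (0 : E) ∈ Metric.closedBall 0 R := Metric.mem_closedBall_self hR
  have hM0 : 0 ≤ M := (norm_nonneg _).trans (hM 0 hzero)
  have hN0 : 0 ≤ N := (norm_nonneg _).trans (hN 0 hzero)
  have hint : IntegrableOn (fun x ↦ ((‖x‖ : ℂ) ^ 2 + w)⁻¹ • f x) (Metric.ball 0 R) μ :=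
    ((continuous_inv_norm_sq_add_smul hw hf.continuous).continuousOn.integrableOn_compact
      (isCompact_closedBall 0 R)).mono_set Metric.ball_subset_closedBall
  rw [setIntegral_ball_eq_integral_toSphere μ hR hint, hE]
  refine norm_integral_le_of_norm_le_const (.of_forall fun ω ↦ ?_)
  have hω : ‖(ω : E)‖ = 1 := norm_eq_of_mem_sphere ω
  calc _ = ‖∫ s in (0 : ℝ)..R, s ^ (n + 2) • (((s : ℂ) ^ 2 + w)⁻¹ • f (s • (ω : E)))‖ := by
        congr 1
        refine intervalIntegral.integral_congr fun s _ ↦ ?_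
        simp only [norm_smul, hω, mul_one, Real.norm_eq_abs, ← ofReal_pow, sq_abs]
        rfl
    _ ≤ _ := norm_integral_pow_smul_inv_sq_add_smul_ray_le hw hR hf hf0 hM hN hω n
    _ ≤ _ := by
        gcongr
        exact integral_norm_log_sq_add_le hw hR

-- The condition `-z ∈ slitPlane` keeps `z` off the half-line `[0, ∞)` of values of `‖x‖ ^ 2`.
theorem statement17_general (hE : 3 ≤ Module.finrank ℝ E) (hR : 0 ≤ R) :
    ∃ C, ∀ (f : E → F) (M N : ℝ) (z : ℂ), -z ∈ slitPlane → ContDiff ℝ 1 f →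
      (∀ x ∈ Metric.sphere 0 R, f x = 0) →
      (∀ x ∈ Metric.closedBall 0 R, ‖f x‖ ≤ M) →
      (∀ x ∈ Metric.closedBall 0 R, ‖fderiv ℝ f x‖ ≤ N) →
      ‖∫ x in Metric.ball 0 R, (z - (‖x‖ : ℂ) ^ 2)⁻¹ • f x ∂μ‖ ≤ C * (M + N) := by
  obtain ⟨n, hn⟩ : ∃ n, Module.finrank ℝ E = n + 3 := ⟨Module.finrank ℝ E - 3, by omega⟩
  set L := R * (R ^ 2 + (R ^ 2 + 1) + π) + 2 * ∫ u : ℝ, log⁺ u⁻¹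
  have hposLog : 0 ≤ ∫ u : ℝ, log⁺ u⁻¹ := integral_nonneg fun _ ↦ posLog_nonneg
  refine ⟨μ.real (Metric.ball 0 R) +
    2⁻¹ * (L * (R ^ (n + 1) + (n + 1) * R ^ n)) * μ.toSphere.real Set.univ,
    fun f M N z hz hf hf0 hM hN ↦ ?_⟩
  have hzero : (0 : E) ∈ Metric.closedBall 0 R := Metric.mem_closedBall_self hR
  have hM0 : 0 ≤ M := (norm_nonneg _).trans (hM 0 hzero)
  have hN0 : 0 ≤ N := (norm_nonneg _).trans (hN 0 hzero)
  have hneg : ∀ x : E, (z - (‖x‖ : ℂ) ^ 2)⁻¹ • f x = -(((‖x‖ : ℂ) ^ 2 + -z)⁻¹ • f x) :=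
    fun x ↦ by rw [← neg_smul, ← inv_neg, neg_add, neg_neg, neg_add_eq_sub]
  simp_rw [hneg]
  rw [integral_neg, norm_neg, add_mul]
  rcases le_total (R ^ 2 + 1) ‖-z‖ with hlarge | hsmall
  · refine (norm_setIntegral_inv_norm_sq_add_smul_le_of_le_norm μ hlarge hM).trans ?_
    rw [mul_comm M]
    refine le_add_of_le_of_nonneg ?_ (by positivity)
    gcongr
    exact le_add_of_nonneg_right hN0
  · refine le_add_of_nonneg_of_le (by positivity) ?_
    refine (norm_setIntegral_inv_norm_sq_add_smul_le μ hn hz hR hf hf0 hM hN).trans ?_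
    calc _ ≤ 2⁻¹ * (L * (R ^ (n + 1) * (M + N) + (n + 1) * R ^ n * (M + N))) *
            μ.toSphere.real Set.univ := by
          have hMle : M ≤ M + N := le_add_of_nonneg_right hN0
          have hNle : N ≤ M + N := le_add_of_nonneg_left hM0
          gcongr
          exact add_le_add_left (mul_le_mul_of_nonneg_left (by gcongr) hR) _
      _ = _ := by ring

end Resolvent

section RealValued

variable {E : Type*} [NormedAddCommGroup E] [NormedSpace ℝ E]

lemma norm_fderiv_ofReal_comp {f : E → ℝ} {x : E} (hf : DifferentiableAt ℝ f x) :
    ‖fderiv ℝ (fun y ↦ (f y : ℂ)) x‖ = ‖fderiv ℝ f x‖ := by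
  have hcomp : fderiv ℝ (fun y ↦ (f y : ℂ)) x = ofRealCLM.comp (fderiv ℝ f x) :=
    (ofRealCLM.hasFDerivAt.comp x hf.hasFDerivAt).fderiv
  rw [hcomp]
  exact ofRealLI.norm_toContinuousLinearMap_comp

variable [FiniteDimensional ℝ E] [MeasurableSpace E] [BorelSpace E]
  (μ : Measure E) [μ.IsAddHaarMeasure] {R : ℝ}

lemma exists_norm_setIntegral_ofReal_div_sub_norm_sq_le {ι : Type*} (v : Module.Basis ι ℝ E)
    (hE : 3 ≤ Module.finrank ℝ E) (hR : 0 ≤ R) :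
    ∃ C, ∀ (f : E → ℝ) (M : ℝ) (z : ℂ), z.im ≠ 0 → ContDiff ℝ 1 f →
      tsupport f ⊆ Metric.ball 0 R → (∀ x, |f x| ≤ M) → (∀ x i, |fderiv ℝ f x (v i)| ≤ M) →
      ‖∫ x in Metric.ball 0 R, (f x : ℂ) / (z - ((‖x‖ ^ 2 : ℝ) : ℂ)) ∂μ‖ ≤ C * M := by
  have : Finite ι := Module.Finite.finite_basis v
  obtain ⟨K, -, hK⟩ := v.exists_opNorm_le (F := ℝ)
  obtain ⟨C, hC⟩ := statement17_general (F := ℂ) μ hE hR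
  refine ⟨C * (1 + K), fun f M z hz hf hsupp hM hN ↦ ?_⟩
  have hM0 : 0 ≤ M := (abs_nonneg _).trans (hM 0)
  have hsphere : ∀ x ∈ Metric.sphere 0 R, (f x : ℂ) = 0 := fun x hx ↦ by
    have hx' : x ∉ tsupport f :=
      fun h ↦ Metric.sphere_disjoint_ball.notMem_of_mem_left hx (hsupp h)
    rw [image_eq_zero_of_notMem_tsupport hx', ofReal_zero]
  have hbound := hC (fun x ↦ (f x : ℂ)) M (K * M) z (mem_slitPlane_iff.2 (.inr (by simpa)))
    (ofRealCLM.contDiff.comp hf) hsphere (fun x _ ↦ by simpa using hM x)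
    fun x _ ↦ (norm_fderiv_ofReal_comp (hf.differentiable one_ne_zero x)).trans_le
      (hK hM0 (hN x))
  simpa only [ofReal_pow, div_eq_inv_mul, smul_eq_mul, mul_assoc, add_mul, one_mul] using hbound

end RealValued

/-- Lemma 2: fully elliptic van Hove singularity.
For `d ≥ 3` and `0 < r < 1` there is `C < ∞`, depending only on `d` and `r`, such that
for every `C¹` function `f : ℝ^d → ℝ` with compact support in `B_d` and
`‖f‖_{C¹} ≤ M`, every `a ∈ ℝ` and every `b ≠ 0`:
`|∫_{B_d} f(x)/(a + ib - |x|²) dx| ≤ C M (1 + a² + b²)`. -/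
theorem statement17 (d : ℕ) (hd : 3 ≤ d) (r : ℝ) (hr0 : 0 < r) (hr1 : r < 1) :
    ∃ c : ℝ, ∀ (f : EuclideanSpace ℝ (Fin d) → ℝ) (M : ℝ) (a b : ℝ), b ≠ 0 →
      ContDiff ℝ 1 f →
      tsupport f ⊆ Metric.ball (0 : EuclideanSpace ℝ (Fin d)) r →
      (∀ x, |f x| ≤ M) →
      (∀ (x : EuclideanSpace ℝ (Fin d)) (i : Fin d),
        |fderiv ℝ f x (EuclideanSpace.single i 1)| ≤ M) →
      ‖∫ x in Metric.ball (0 : EuclideanSpace ℝ (Fin d)) r,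
          (f x : ℂ) / ((a : ℂ) + Complex.I * (b : ℂ) - ((‖x‖ ^ 2 : ℝ) : ℂ))‖ ≤
        c * M * (1 + a ^ 2 + b ^ 2) := by
  have hfinrank : 3 ≤ Module.finrank ℝ (EuclideanSpace ℝ (Fin d)) := by simpa using hd
  obtain ⟨C, hC⟩ := exists_norm_setIntegral_ofReal_div_sub_norm_sq_le volume
    (EuclideanSpace.basisFun (Fin d) ℝ).toBasis hfinrank hr0.le
  refine ⟨C, fun f M a b hb hf hsupp hM hN ↦ ?_⟩
  have hbound := hC f M (a + Complex.I * b) (by simpa) hf hsupp hM (by simpa)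
  exact hbound.trans (le_mul_of_one_le_right ((norm_nonneg _).trans hbound)
    (by linarith [sq_nonneg a, sq_nonneg b]))

end LatSch
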